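/- arXiv:1611.00154 — 2 statements merged into one kernel-verified Lean document; each statement's English description precedes it below -/
import Mathlib

section
/- Under the stated assumptions, for every pair of continuous linear functionals f_R : R → ℝ and f_S : S → ℝ, the mixed system: find (u, φ, ζ) ∈ R × S × Y such that a_R(u, v) + b(v, φ) + c(B v, ζ) = f_R(v) for all v ∈ R, b(u, ψ) + a_S(φ, ψ) − c(ι ψ, ζ) = f_S(ψ) for all ψ ∈ S, and c(B u − ι φ, η) = 0 for all η ∈ Y, admits exactly one solution (u, φ, ζ). Moreover there exist constants C₁, C₂ > 0, independent of f_R and f_S, such that C₁(‖f_R‖_{R'} + ‖f_S‖_{S'}) ≤ ‖u‖_R + ‖φ‖_S + ‖ζ‖_Y ≤ C₂(‖f_R‖_{R'} + ‖f_S‖_{S'}). Furthermore u ∈ W with B u = ι φ, and u solves the primal problem: a_R(u, v) + b(u, s_v) + b(v, φ) + a_S(φ, s_v) = f_R(v) + f_S(s_v) for all v ∈ W. (Paper's Theorem 2.1.) -/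
/-- Membership in the sum space `Y = B(R) + ι(S) ⊆ H`. -/
def memY
    {R S H : Type*}
    [NormedAddCommGroup R] [InnerProductSpace ℝ R]
    [NormedAddCommGroup S] [InnerProductSpace ℝ S]
    [NormedAddCommGroup H] [InnerProductSpace ℝ H]
    (B : R →L[ℝ] H) (ι : S →L[ℝ] H) (y : H) : Prop :=
  ∃ (r : R) (s : S), y = B r + ι s

/-- The sum-space norm `‖y‖_Y = inf {‖B r‖_H + ‖s‖_S | y = B r + ι s}` on
`Y = B(R) + ι(S)`. -/
noncomputable def normY
    {R S H : Type*}
    [NormedAddCommGroup R] [InnerProductSpace ℝ R]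
    [NormedAddCommGroup S] [InnerProductSpace ℝ S]
    [NormedAddCommGroup H] [InnerProductSpace ℝ H]
    (B : R →L[ℝ] H) (ι : S →L[ℝ] H) (y : H) : ℝ :=
  sInf {t : ℝ | ∃ (r : R) (s : S), y = B r + ι s ∧ t = ‖B r‖ + ‖s‖}

/-!
On the Hilbert space `X = R ⊕ S` let `T (r, s) = B r - ι s`, so that `Y = T X` and `W ≅ ker T`.
Pulling the data back to `X` turns the mixed system into
`p ∈ ker T`, `A p x + C z x = F x` for all `x`, with `ζ = T z` and `C z x = c (T x) (T z)`.
Restricted to `ker T` this is the primal problem, which Lax-Milgram solves for `p`; then `F - A p`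
vanishes on `ker T`, so a second application of Lax-Milgram, to `C` on `(ker T)ᗮ`, yields `z`.
Coercivity of `C` there is where closedness of `B(R)` enters: elements of `(ker T)ᗮ` have least
norm in their fibre of `T`, and by the open mapping theorem every decomposition `T x = B r + ι s`
lifts to an element of that fibre of norm at most a constant times `‖B r‖ + ‖s‖`.
-/

section FunctionalAnalysis

theorem norm_le_of_mem_orthogonal_of_sub_mem {𝕜 E : Type*} [RCLike 𝕜] [NormedAddCommGroup E]
    [InnerProductSpace 𝕜 E] {K : Submodule 𝕜 E} {x w : E} (hx : x ∈ Kᗮ) (hwx : w - x ∈ K) :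
    ‖x‖ ≤ ‖w‖ := by
  have pythagoras := norm_add_sq_eq_norm_sq_add_norm_sq_of_inner_eq_zero (w - x) x (hx _ hwx)
  rw [sub_add_cancel] at pythagoras
  exact abs_le_of_sq_le_sq' (by nlinarith [sq_nonneg ‖w - x‖]) (norm_nonneg w) |>.2

theorem exists_mem_orthogonal_ker_map_eq {𝕜 E F : Type*} [RCLike 𝕜] [NormedAddCommGroup E]
    [InnerProductSpace 𝕜 E] [AddCommGroup F] [Module 𝕜 F] (T : E →ₗ[𝕜] F)
    [T.ker.HasOrthogonalProjection] (x : E) : ∃ z ∈ T.kerᗮ, T z = T x := by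
  obtain ⟨k, hk, z, hz, rfl⟩ := T.ker.exists_add_mem_mem_orthogonal x
  exact ⟨z, hz, by rw [map_add, LinearMap.mem_ker.1 hk, zero_add]⟩

theorem exists_preimage_norm_le_of_isClosed_range {𝕜 E F : Type*} [NontriviallyNormedField 𝕜]
    [NormedAddCommGroup E] [NormedSpace 𝕜 E] [CompleteSpace E]
    [NormedAddCommGroup F] [NormedSpace 𝕜 F] [CompleteSpace F]
    (f : E →L[𝕜] F) (hf : IsClosed (Set.range f)) :
    ∃ Q > 0, ∀ x, ∃ x', f x' = f x ∧ ‖x'‖ ≤ Q * ‖f x‖ := by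
  have : CompleteSpace f.range := hf.completeSpace_coe
  obtain ⟨Q, hQ, hpre⟩ :=
    f.rangeRestrict.exists_preimage_norm_le f.toLinearMap.surjective_rangeRestrict
  refine ⟨Q, hQ, fun x => ?_⟩
  obtain ⟨x', hx', hle⟩ := hpre (f.rangeRestrict x)
  exact ⟨x', congrArg Subtype.val hx', hle⟩

theorem norm_le_opNorm_div_of_mul_norm_sq_le {E : Type*} [SeminormedAddCommGroup E]
    [NormedSpace ℝ E] {κ : ℝ} (hκ : 0 < κ) {f : E →L[ℝ] ℝ} {x : E} (h : κ * ‖x‖ ^ 2 ≤ f x) :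
    ‖x‖ ≤ ‖f‖ / κ := by
  rw [le_div_iff₀ hκ]
  rcases (norm_nonneg x).eq_or_lt with hx | hx
  · simp [← hx]
  · have hfx : f x ≤ ‖f‖ * ‖x‖ := (le_abs_self _).trans (f.le_opNorm x)
    exact le_of_mul_le_mul_right (by linarith) hx

theorem norm_le_norm_fst_add_norm_snd {E F : Type*} [SeminormedAddCommGroup E]
    [SeminormedAddCommGroup F] (x : WithLp 2 (E × F)) : ‖x‖ ≤ ‖x.fst‖ + ‖x.snd‖ := by
  refine abs_le_of_sq_le_sq' ?_ (by positivity) |>.2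
  rw [WithLp.prod_norm_sq_eq_of_L2]
  nlinarith [mul_nonneg (norm_nonneg x.fst) (norm_nonneg x.snd)]

end FunctionalAnalysis

section SaddlePoint

variable {X : Type*} [NormedAddCommGroup X] [InnerProductSpace ℝ X]

theorem exists_mem_forall_mem_eq_of_coercive (A : X →L[ℝ] X →L[ℝ] ℝ) (K : Submodule ℝ X)
    [CompleteSpace K] {κ : ℝ} (hκ : 0 < κ) (hA : ∀ x ∈ K, κ * ‖x‖ ^ 2 ≤ A x x)
    (F : X →L[ℝ] ℝ) : ∃ p ∈ K, ∀ x ∈ K, A p x = F x := by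
  have coercive : IsCoercive (A.bilinearComp K.subtypeL K.subtypeL) :=
    ⟨κ, hκ, fun x => by simpa [pow_two, mul_assoc] using hA x x.2⟩
  let f : K := (InnerProductSpace.toDual ℝ K).symm (F ∘L K.subtypeL)
  let p : K := coercive.continuousLinearEquivOfBilin.symm f
  refine ⟨p, p.2, fun x hx => ?_⟩
  calc A p x = inner ℝ (coercive.continuousLinearEquivOfBilin p) ⟨x, hx⟩ :=
        (coercive.continuousLinearEquivOfBilin_apply p ⟨x, hx⟩).symm
    _ = F x := by simp [p, f]

variable {A C : X →L[ℝ] X →L[ℝ] ℝ} {K : Submodule ℝ X} {κ γ : ℝ}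

theorem exists_saddle_solution [CompleteSpace X] [CompleteSpace K]
    (hκ : 0 < κ) (hA : ∀ x ∈ K, κ * ‖x‖ ^ 2 ≤ A x x)
    (hγ : 0 < γ) (hC : ∀ z ∈ Kᗮ, γ * ‖z‖ ^ 2 ≤ C z z)
    (hCK : ∀ z, ∀ x ∈ K, C z x = 0) (F : X →L[ℝ] ℝ) :
    ∃ p ∈ K, ∃ z ∈ Kᗮ, ∀ x, A p x + C z x = F x := by
  obtain ⟨p, hpK, hp⟩ := exists_mem_forall_mem_eq_of_coercive A K hκ hA F
  obtain ⟨z, hzK, hz⟩ := exists_mem_forall_mem_eq_of_coercive C Kᗮ hγ hC (F - A p)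
  refine ⟨p, hpK, z, hzK, fun x => ?_⟩
  obtain ⟨k, hk, l, hl, rfl⟩ := K.exists_add_mem_mem_orthogonal x
  have hzl : C z l = F l - A p l := hz l hl
  rw [map_add, map_add, map_add, hp k hk, hCK z k hk, hzl]
  ring

theorem exists_norm_add_norm_le_of_saddle
    (hκ : 0 < κ) (hA : ∀ x ∈ K, κ * ‖x‖ ^ 2 ≤ A x x)
    (hγ : 0 < γ) (hC : ∀ z ∈ Kᗮ, γ * ‖z‖ ^ 2 ≤ C z z)
    (hCK : ∀ z, ∀ x ∈ K, C z x = 0) :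
    ∃ D > 0, ∀ {F : X →L[ℝ] ℝ} {p z : X}, p ∈ K → z ∈ Kᗮ → (∀ x, A p x + C z x = F x) →
      ‖p‖ + ‖z‖ ≤ D * ‖F‖ := by
  refine ⟨1 / κ + (1 + ‖A‖ / κ) / γ, by positivity, fun {F p z} hp hz h => ?_⟩
  have norm_p_le : ‖p‖ ≤ ‖F‖ / κ :=
    norm_le_opNorm_div_of_mul_norm_sq_le hκ (by linarith [hA p hp, h p, hCK z p hp])
  have residual_le : ‖F - A p‖ ≤ (1 + ‖A‖ / κ) * ‖F‖ :=
    calc ‖F - A p‖ ≤ ‖F‖ + ‖A p‖ := norm_sub_le _ _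
      _ ≤ ‖F‖ + ‖A‖ * (‖F‖ / κ) := by gcongr; exact A.le_opNorm_of_le norm_p_le
      _ = (1 + ‖A‖ / κ) * ‖F‖ := by ring
  have norm_z_le : ‖z‖ ≤ ‖F - A p‖ / γ :=
    norm_le_opNorm_div_of_mul_norm_sq_le hγ (by rw [sub_apply]; linarith [hC z hz, h z])
  calc ‖p‖ + ‖z‖ ≤ ‖F‖ / κ + (1 + ‖A‖ / κ) * ‖F‖ / γ := by
        gcongr; exact norm_z_le.trans (by gcongr)
    _ = (1 / κ + (1 + ‖A‖ / κ) / γ) * ‖F‖ := by ring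

end SaddlePoint

section MixedSystem

variable {R S H : Type*}
  [NormedAddCommGroup R] [InnerProductSpace ℝ R]
  [NormedAddCommGroup S] [InnerProductSpace ℝ S]
  [NormedAddCommGroup H] [InnerProductSpace ℝ H]

/-- The operator `(r, s) ↦ B r - ι s` on the Hilbert sum `R ⊕ S`. Its range is the sum space `Y`,
and its kernel is the graph of `w ↦ s_w` over `W`. -/
def constraintMap (B : R →L[ℝ] H) (ι : S →L[ℝ] H) : WithLp 2 (R × S) →L[ℝ] H :=
  B ∘L WithLp.fstL 2 ℝ R S - ι ∘L WithLp.sndL 2 ℝ R S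

/-- The form `((u, φ), (v, ψ)) ↦ aR u v + b u ψ + b v φ + aS φ ψ` on `R ⊕ S`, which restricts to the
primal form `a` on the graph of `w ↦ s_w`. -/
noncomputable def blockForm (aR : R →L[ℝ] R →L[ℝ] ℝ) (aS : S →L[ℝ] S →L[ℝ] ℝ)
    (b : R →L[ℝ] S →L[ℝ] ℝ) : WithLp 2 (R × S) →L[ℝ] WithLp 2 (R × S) →L[ℝ] ℝ :=
  letI fst := WithLp.fstL 2 ℝ R S
  letI snd := WithLp.sndL 2 ℝ R S
  aR.bilinearComp fst fst + b.bilinearComp fst snd + b.flip.bilinearComp snd fst +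
    aS.bilinearComp snd snd

/-- The load `(v, ψ) ↦ fR v + fS ψ` on `R ⊕ S`. -/
def blockLoad (fR : R →L[ℝ] ℝ) (fS : S →L[ℝ] ℝ) : WithLp 2 (R × S) →L[ℝ] ℝ :=
  fR ∘L WithLp.fstL 2 ℝ R S + fS ∘L WithLp.sndL 2 ℝ R S

theorem constraintMap_apply (B : R →L[ℝ] H) (ι : S →L[ℝ] H) (x : WithLp 2 (R × S)) :
    constraintMap B ι x = B x.fst - ι x.snd := rfl

theorem blockForm_apply (aR : R →L[ℝ] R →L[ℝ] ℝ) (aS : S →L[ℝ] S →L[ℝ] ℝ)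
    (b : R →L[ℝ] S →L[ℝ] ℝ) (p x : WithLp 2 (R × S)) :
    blockForm aR aS b p x =
      aR p.fst x.fst + b p.fst x.snd + b x.fst p.snd + aS p.snd x.snd := rfl

theorem blockLoad_apply (fR : R →L[ℝ] ℝ) (fS : S →L[ℝ] ℝ) (x : WithLp 2 (R × S)) :
    blockLoad fR fS x = fR x.fst + fS x.snd := rfl

theorem norm_blockLoad_le (fR : R →L[ℝ] ℝ) (fS : S →L[ℝ] ℝ) :
    ‖blockLoad fR fS‖ ≤ ‖fR‖ + ‖fS‖ := by
  refine ContinuousLinearMap.opNorm_le_bound _ (by positivity) fun x => ?_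
  calc ‖blockLoad fR fS x‖ ≤ ‖fR x.fst‖ + ‖fS x.snd‖ := norm_add_le _ _
    _ ≤ ‖fR‖ * ‖x‖ + ‖fS‖ * ‖x‖ := add_le_add
      (fR.le_opNorm_of_le (WithLp.norm_fst_le _ x)) (fS.le_opNorm_of_le (WithLp.norm_snd_le _ x))
    _ = (‖fR‖ + ‖fS‖) * ‖x‖ := by ring

section SumSpace

variable {B : R →L[ℝ] H} {ι : S →L[ℝ] H} {y z : H}

theorem memY_iff_mem_range_constraintMap : memY B ι y ↔ y ∈ (constraintMap B ι).range := by
  constructor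
  · rintro ⟨r, s, rfl⟩
    exact ⟨WithLp.toLp 2 (r, -s), by simp [constraintMap_apply]⟩
  · rintro ⟨x, rfl⟩
    exact ⟨x.fst, -x.snd, by simp [constraintMap_apply, sub_eq_add_neg]⟩

theorem memY_constraintMap (x : WithLp 2 (R × S)) : memY B ι (constraintMap B ι x) :=
  memY_iff_mem_range_constraintMap.2 ⟨x, rfl⟩

theorem memY_apply_left (r : R) : memY B ι (B r) := ⟨r, 0, by simp⟩

theorem memY_apply_right (s : S) : memY B ι (ι s) := ⟨0, s, by simp⟩

theorem memY.add (hy : memY B ι y) (hz : memY B ι z) : memY B ι (y + z) := by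
  rw [memY_iff_mem_range_constraintMap] at *
  exact add_mem hy hz

theorem memY.smul (t : ℝ) (hy : memY B ι y) : memY B ι (t • y) := by
  rw [memY_iff_mem_range_constraintMap] at *
  exact Submodule.smul_mem _ t hy

theorem normY_nonneg (B : R →L[ℝ] H) (ι : S →L[ℝ] H) (y : H) : 0 ≤ normY B ι y := by
  refine Real.sInf_nonneg ?_
  rintro _ ⟨r, s, -, rfl⟩
  positivity

theorem normY_le {r : R} {s : S} (h : y = B r + ι s) : normY B ι y ≤ ‖B r‖ + ‖s‖ := by
  refine csInf_le ⟨0, ?_⟩ ⟨r, s, h, rfl⟩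
  rintro _ ⟨r, s, -, rfl⟩
  positivity

theorem le_normY {t : ℝ} (hy : memY B ι y) (h : ∀ r s, y = B r + ι s → t ≤ ‖B r‖ + ‖s‖) :
    t ≤ normY B ι y := by
  obtain ⟨r, s, hrs⟩ := hy
  refine le_csInf ⟨_, r, s, hrs, rfl⟩ ?_
  rintro _ ⟨r, s, hrs, rfl⟩
  exact h r s hrs

theorem normY_apply_left_le (r : R) : normY B ι (B r) ≤ ‖B r‖ := by
  simpa using normY_le (B := B) (ι := ι) (r := r) (s := 0) (by simp)

theorem normY_apply_right_le (s : S) : normY B ι (ι s) ≤ ‖s‖ := by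
  simpa using normY_le (B := B) (ι := ι) (r := 0) (s := s) (by simp)

theorem norm_le_mul_normY (hy : memY B ι y) : ‖y‖ ≤ (1 + ‖ι‖) * normY B ι y := by
  rw [← div_le_iff₀' (by positivity)]
  refine le_normY hy fun r s hrs => ?_
  rw [div_le_iff₀' (by positivity)]
  calc ‖y‖ ≤ ‖B r‖ + ‖ι s‖ := hrs ▸ norm_add_le _ _
    _ ≤ ‖B r‖ + ‖ι‖ * ‖s‖ := by gcongr; exact ι.le_opNorm s
    _ ≤ (1 + ‖ι‖) * (‖B r‖ + ‖s‖) := by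
      nlinarith [norm_nonneg s, mul_nonneg (norm_nonneg ι) (norm_nonneg (B r))]

theorem eq_zero_of_normY_eq_zero (hy : memY B ι y) (h : normY B ι y = 0) : y = 0 := by
  simpa [h] using norm_le_mul_normY hy

theorem normY_constraintMap_le (x : WithLp 2 (R × S)) :
    normY B ι (constraintMap B ι x) ≤ (‖B‖ + 1) * ‖x‖ :=
  calc normY B ι (constraintMap B ι x) ≤ ‖B x.fst‖ + ‖-x.snd‖ :=
        normY_le (by simp [constraintMap_apply, sub_eq_add_neg])
    _ ≤ ‖B‖ * ‖x‖ + ‖x‖ := by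
        rw [norm_neg]
        exact add_le_add (B.le_opNorm_of_le (WithLp.norm_fst_le _ x)) (WithLp.norm_snd_le _ x)
    _ = (‖B‖ + 1) * ‖x‖ := by ring

theorem exists_norm_le_mul_normY_constraintMap [CompleteSpace R] [CompleteSpace H]
    (ι : S →L[ℝ] H) (hB : IsClosed (Set.range B)) :
    ∃ L > 0, ∀ x ∈ (constraintMap B ι).kerᗮ, ‖x‖ ≤ L * normY B ι (constraintMap B ι x) := by
  obtain ⟨Q, hQ, hlift⟩ := exists_preimage_norm_le_of_isClosed_range B hB
  refine ⟨Q + 1, by positivity, fun x hx => ?_⟩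
  rw [← div_le_iff₀' (by positivity)]
  refine le_normY (memY_constraintMap x) fun r s hrs => ?_
  rw [div_le_iff₀' (by positivity)]
  obtain ⟨r', hr', hr'_le⟩ := hlift r
  let w : WithLp 2 (R × S) := WithLp.toLp 2 (r', -s)
  have hw : w - x ∈ (constraintMap B ι).ker := by
    rw [LinearMap.sub_mem_ker_iff]
    simp [hrs, constraintMap_apply, w, hr']
  calc ‖x‖ ≤ ‖w‖ := norm_le_of_mem_orthogonal_of_sub_mem hx hw
    _ ≤ ‖r'‖ + ‖s‖ := by simpa [w] using norm_le_norm_fst_add_norm_snd w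
    _ ≤ Q * ‖B r‖ + ‖s‖ := by gcongr
    _ ≤ (Q + 1) * (‖B r‖ + ‖s‖) := by nlinarith [norm_nonneg s, norm_nonneg (B r)]

end SumSpace

/-- `c` restricts to an inner product on the sum space `Y = B(R) + ι(S)` that is coercive and
bounded for `normY`, with constants `m` and `M`. Nothing is required of the values of `c`
off `Y`. -/
structure IsInnerOnSumSpace (B : R →L[ℝ] H) (ι : S →L[ℝ] H) (c : H → H → ℝ) (m M : ℝ) : Prop where
  lower_pos : 0 < m
  upper_pos : 0 < M
  symm : ∀ y z, memY B ι y → memY B ι z → c y z = c z y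
  add_left : ∀ y₁ y₂ z, memY B ι y₁ → memY B ι y₂ → memY B ι z → c (y₁ + y₂) z = c y₁ z + c y₂ z
  smul_left : ∀ (t : ℝ) (y z), memY B ι y → memY B ι z → c (t • y) z = t * c y z
  coercive : ∀ y, memY B ι y → m * normY B ι y ^ 2 ≤ c y y
  bounded : ∀ y z, memY B ι y → memY B ι z → |c y z| ≤ M * normY B ι y * normY B ι z

namespace IsInnerOnSumSpace

variable {B : R →L[ℝ] H} {ι : S →L[ℝ] H} {c : H → H → ℝ} {m M : ℝ}
  (hc : IsInnerOnSumSpace B ι c m M) {y z z₁ z₂ : H}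

include hc

theorem zero_left (hz : memY B ι z) : c 0 z = 0 := by
  simpa using hc.smul_left 0 z z hz hz

theorem sub_left {y₁ y₂ : H} (hy₁ : memY B ι y₁) (hy₂ : memY B ι y₂) (hz : memY B ι z) :
    c (y₁ - y₂) z = c y₁ z - c y₂ z := by
  rw [sub_eq_add_neg, ← neg_one_smul ℝ y₂, hc.add_left _ _ _ hy₁ (hy₂.smul _) hz,
    hc.smul_left _ _ _ hy₂ hz]
  ring

theorem add_right (hy : memY B ι y) (hz₁ : memY B ι z₁) (hz₂ : memY B ι z₂) :
    c y (z₁ + z₂) = c y z₁ + c y z₂ := by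
  rw [hc.symm _ _ hy (hz₁.add hz₂), hc.add_left _ _ _ hz₁ hz₂ hy, hc.symm _ _ hz₁ hy,
    hc.symm _ _ hz₂ hy]

theorem smul_right (t : ℝ) (hy : memY B ι y) (hz : memY B ι z) : c y (t • z) = t * c y z := by
  rw [hc.symm _ _ hy (hz.smul t), hc.smul_left _ _ _ hz hy, hc.symm _ _ hz hy]

theorem eq_zero_of_self_eq_zero (hy : memY B ι y) (h : c y y = 0) : y = 0 := by
  refine eq_zero_of_normY_eq_zero hy (pow_eq_zero_iff two_ne_zero |>.1 ?_)
  have : m * normY B ι y ^ 2 ≤ 0 := h ▸ hc.coercive y hy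
  exact le_antisymm (nonpos_of_mul_nonpos_right this hc.lower_pos) (sq_nonneg _)

theorem abs_constraintMap_le (x z : WithLp 2 (R × S)) :
    |c (constraintMap B ι x) (constraintMap B ι z)| ≤ M * (‖B‖ + 1) ^ 2 * ‖z‖ * ‖x‖ :=
  calc _ ≤ M * normY B ι (constraintMap B ι x) * normY B ι (constraintMap B ι z) :=
        hc.bounded _ _ (memY_constraintMap x) (memY_constraintMap z)
    _ ≤ M * ((‖B‖ + 1) * ‖x‖) * ((‖B‖ + 1) * ‖z‖) := by
        have := hc.upper_pos
        gcongr
        exacts [normY_nonneg B ι _, normY_constraintMap_le x, normY_constraintMap_le z]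
    _ = M * (‖B‖ + 1) ^ 2 * ‖z‖ * ‖x‖ := by ring

/-- The pullback of `c` to `R ⊕ S` along `constraintMap B ι`. The multiplier is the first argument
of the pullback, while it is the second argument of `c` in the mixed system. -/
noncomputable def pullback : WithLp 2 (R × S) →L[ℝ] WithLp 2 (R × S) →L[ℝ] ℝ :=
  LinearMap.mkContinuous₂
    (LinearMap.mk₂ ℝ (fun z x => c (constraintMap B ι x) (constraintMap B ι z))
      (fun z₁ z₂ x => by
        rw [map_add, hc.add_right] <;> exact memY_constraintMap _)
      (fun t z x => by
        rw [map_smul, hc.smul_right, smul_eq_mul] <;> exact memY_constraintMap _)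
      (fun z x₁ x₂ => by
        rw [map_add, hc.add_left] <;> exact memY_constraintMap _)
      (fun t z x => by
        rw [map_smul, hc.smul_left, smul_eq_mul] <;> exact memY_constraintMap _))
    (M * (‖B‖ + 1) ^ 2) (fun z x => hc.abs_constraintMap_le x z)

theorem pullback_apply (z x : WithLp 2 (R × S)) :
    hc.pullback z x = c (constraintMap B ι x) (constraintMap B ι z) := rfl

theorem pullback_eq_zero_of_mem_ker (z : WithLp 2 (R × S)) {x : WithLp 2 (R × S)}
    (hx : x ∈ (constraintMap B ι).ker) : hc.pullback z x = 0 := by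
  have hx : constraintMap B ι x = 0 := hx
  rw [pullback_apply, hx, hc.zero_left (memY_constraintMap z)]

theorem exists_mul_norm_sq_le_pullback [CompleteSpace R] [CompleteSpace H]
    (hB : IsClosed (Set.range B)) :
    ∃ γ > 0, ∀ z ∈ (constraintMap B ι).kerᗮ, γ * ‖z‖ ^ 2 ≤ hc.pullback z z := by
  obtain ⟨L, hL, hle⟩ := exists_norm_le_mul_normY_constraintMap ι hB
  have hm := hc.lower_pos
  refine ⟨m / L ^ 2, by positivity, fun z hz => ?_⟩
  calc m / L ^ 2 * ‖z‖ ^ 2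
      ≤ m / L ^ 2 * (L * normY B ι (constraintMap B ι z)) ^ 2 := by gcongr; exact hle z hz
    _ = m * normY B ι (constraintMap B ι z) ^ 2 := by field_simp
    _ ≤ hc.pullback z z := hc.coercive _ (memY_constraintMap z)

end IsInnerOnSumSpace

theorem mul_norm_sq_le_blockForm {B : R →L[ℝ] H} {ι : S →L[ℝ] H} {aR : R →L[ℝ] R →L[ℝ] ℝ}
    {aS : S →L[ℝ] S →L[ℝ] ℝ} {b : R →L[ℝ] S →L[ℝ] ℝ} {α : ℝ} (hα : 0 ≤ α)
    (hcoer : ∀ v sv, ι sv = B v → α * (‖v‖ + ‖sv‖) ^ 2 ≤ aR v v + 2 * b v sv + aS sv sv)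
    {x : WithLp 2 (R × S)} (hx : x ∈ (constraintMap B ι).ker) :
    α * ‖x‖ ^ 2 ≤ blockForm aR aS b x x :=
  calc α * ‖x‖ ^ 2 ≤ α * (‖x.fst‖ + ‖x.snd‖) ^ 2 := by gcongr; exact norm_le_norm_fst_add_norm_snd x
    _ ≤ aR x.fst x.fst + 2 * b x.fst x.snd + aS x.snd x.snd :=
        hcoer _ _ (sub_eq_zero.1 hx).symm
    _ = blockForm aR aS b x x := by rw [blockForm_apply]; ring

/-- `(u, φ, ζ) ∈ R × S × Y` solves the mixed system with data `fR`, `fS`. -/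
structure IsMixedSolution (B : R →L[ℝ] H) (ι : S →L[ℝ] H) (aR : R →L[ℝ] R →L[ℝ] ℝ)
    (aS : S →L[ℝ] S →L[ℝ] ℝ) (b : R →L[ℝ] S →L[ℝ] ℝ) (c : H → H → ℝ)
    (fR : R →L[ℝ] ℝ) (fS : S →L[ℝ] ℝ) (u : R) (φ : S) (ζ : H) : Prop where
  multiplier_mem : memY B ι ζ
  eq_left : ∀ v, aR u v + b v φ + c (B v) ζ = fR v
  eq_right : ∀ ψ, b u ψ + aS φ ψ - c (ι ψ) ζ = fS ψ
  orthogonal : ∀ η, memY B ι η → c (B u - ι φ) η = 0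

section Solutions

variable {B : R →L[ℝ] H} {ι : S →L[ℝ] H} {aR : R →L[ℝ] R →L[ℝ] ℝ} {aS : S →L[ℝ] S →L[ℝ] ℝ}
  {b : R →L[ℝ] S →L[ℝ] ℝ} {c : H → H → ℝ} {m M : ℝ} (hc : IsInnerOnSumSpace B ι c m M)
  {fR : R →L[ℝ] ℝ} {fS : S →L[ℝ] ℝ} {u u' : R} {φ φ' : S} {ζ ζ' : H}

theorem isMixedSolution_iff {p z : WithLp 2 (R × S)} :
    IsMixedSolution B ι aR aS b c fR fS p.fst p.snd (constraintMap B ι z) ↔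
      p ∈ (constraintMap B ι).ker ∧
        ∀ x, blockForm aR aS b p x + hc.pullback z x = blockLoad fR fS x := by
  have hz : memY B ι (constraintMap B ι z) := memY_constraintMap z
  have pullback_split (x : WithLp 2 (R × S)) : hc.pullback z x =
      c (B x.fst) (constraintMap B ι z) - c (ι x.snd) (constraintMap B ι z) :=
    hc.sub_left (memY_apply_left _) (memY_apply_right _) hz
  constructor
  · intro h
    refine ⟨hc.eq_zero_of_self_eq_zero (memY_constraintMap p)
      (h.orthogonal _ (memY_constraintMap p)), fun x => ?_⟩
    rw [pullback_split, blockForm_apply, blockLoad_apply]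
    linarith [h.eq_left x.fst, h.eq_right x.snd]
  · rintro ⟨hp, h⟩
    simp only [pullback_split, blockForm_apply, blockLoad_apply] at h
    refine ⟨hz, fun v => ?_, fun ψ => ?_, fun η hη => ?_⟩
    · simpa [hc.zero_left hz] using h (WithLp.toLp 2 (v, 0))
    · simpa [hc.zero_left hz, sub_eq_add_neg] using h (WithLp.toLp 2 (0, ψ))
    · have hp : B p.fst - ι p.snd = 0 := hp
      rw [hp, hc.zero_left hη]

theorem exists_isMixedSolution [CompleteSpace R] [CompleteSpace S] {α γ : ℝ}
    (hα : 0 < α) (hA : ∀ x ∈ (constraintMap B ι).ker, α * ‖x‖ ^ 2 ≤ blockForm aR aS b x x)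
    (hγ : 0 < γ) (hC : ∀ z ∈ (constraintMap B ι).kerᗮ, γ * ‖z‖ ^ 2 ≤ hc.pullback z z)
    (fR : R →L[ℝ] ℝ) (fS : S →L[ℝ] ℝ) :
    ∃ u φ ζ, IsMixedSolution B ι aR aS b c fR fS u φ ζ := by
  obtain ⟨p, hp, z, -, h⟩ := exists_saddle_solution hα hA hγ hC
    (fun z _ hx => hc.pullback_eq_zero_of_mem_ker z hx) (blockLoad fR fS)
  exact ⟨p.fst, p.snd, constraintMap B ι z, (isMixedSolution_iff hc).2 ⟨hp, h⟩⟩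

namespace IsMixedSolution

theorem primal (h : IsMixedSolution B ι aR aS b c fR fS u φ ζ) {v : R} {sv : S} (hv : ι sv = B v) :
    aR u v + b u sv + b v φ + aS φ sv = fR v + fS sv := by
  have eq_right := h.eq_right sv
  rw [hv] at eq_right
  linarith [h.eq_left v]

include hc

theorem apply_eq (h : IsMixedSolution B ι aR aS b c fR fS u φ ζ) : ι φ = B u :=
  have hu : memY B ι (B u - ι φ) := memY_constraintMap (WithLp.toLp 2 (u, φ))
  (sub_eq_zero.1 (hc.eq_zero_of_self_eq_zero hu (h.orthogonal _ hu))).symm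

theorem exists_norm_le [CompleteSpace R] [CompleteSpace S] {α γ : ℝ}
    (hα : 0 < α) (hA : ∀ x ∈ (constraintMap B ι).ker, α * ‖x‖ ^ 2 ≤ blockForm aR aS b x x)
    (hγ : 0 < γ) (hC : ∀ z ∈ (constraintMap B ι).kerᗮ, γ * ‖z‖ ^ 2 ≤ hc.pullback z z) :
    ∃ D > 0, ∀ {fR fS u φ ζ}, IsMixedSolution B ι aR aS b c fR fS u φ ζ →
      ‖u‖ + ‖φ‖ + normY B ι ζ ≤ D * (‖fR‖ + ‖fS‖) := by
  obtain ⟨D, hD, saddle_le⟩ := exists_norm_add_norm_le_of_saddle hα hA hγ hC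
    (fun z _ hx => hc.pullback_eq_zero_of_mem_ker z hx)
  refine ⟨(‖B‖ + 2) * D, by positivity, fun {fR fS u φ ζ} h => ?_⟩
  obtain ⟨x, rfl⟩ := memY_iff_mem_range_constraintMap.1 h.multiplier_mem
  obtain ⟨z, hz, hzx⟩ := exists_mem_orthogonal_ker_map_eq (constraintMap B ι).toLinearMap x
  rw [← hzx] at h ⊢
  let p : WithLp 2 (R × S) := WithLp.toLp 2 (u, φ)
  obtain ⟨hp, hpz⟩ := (isMixedSolution_iff hc (p := p)).1 h
  calc ‖u‖ + ‖φ‖ + normY B ι (constraintMap B ι z)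
      ≤ ‖p‖ + ‖p‖ + (‖B‖ + 1) * ‖z‖ := add_le_add
        (add_le_add (WithLp.norm_fst_le _ p) (WithLp.norm_snd_le _ p)) (normY_constraintMap_le z)
    _ ≤ (‖B‖ + 2) * (‖p‖ + ‖z‖) := by
        nlinarith [norm_nonneg z, mul_nonneg (norm_nonneg B) (norm_nonneg p)]
    _ ≤ (‖B‖ + 2) * D * (‖fR‖ + ‖fS‖) := by
        rw [mul_assoc]
        gcongr
        exact (saddle_le hp hz hpz).trans (by gcongr; exact norm_blockLoad_le fR fS)

theorem sub {fR' : R →L[ℝ] ℝ} {fS' : S →L[ℝ] ℝ}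
    (h : IsMixedSolution B ι aR aS b c fR fS u φ ζ)
    (h' : IsMixedSolution B ι aR aS b c fR' fS' u' φ' ζ') :
    IsMixedSolution B ι aR aS b c (fR - fR') (fS - fS') (u - u') (φ - φ') (ζ - ζ') := by
  obtain ⟨z, rfl⟩ := memY_iff_mem_range_constraintMap.1 h.multiplier_mem
  obtain ⟨z', rfl⟩ := memY_iff_mem_range_constraintMap.1 h'.multiplier_mem
  obtain ⟨hp, hpz⟩ := (isMixedSolution_iff hc (p := WithLp.toLp 2 (u, φ))).1 h
  obtain ⟨hp', hpz'⟩ := (isMixedSolution_iff hc (p := WithLp.toLp 2 (u', φ'))).1 h'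
  rw [← map_sub]
  refine (isMixedSolution_iff hc (p := WithLp.toLp 2 (u, φ) - WithLp.toLp 2 (u', φ'))).2
    ⟨sub_mem hp hp', fun x => ?_⟩
  have load_sub : blockLoad (fR - fR') (fS - fS') x = blockLoad fR fS x - blockLoad fR' fS' x := by
    simp only [blockLoad_apply, sub_apply]
    ring
  rw [load_sub, ← hpz x, ← hpz' x]
  simp only [map_sub, sub_apply]
  ring

theorem eq_of_norm_le {D : ℝ}
    (hD : ∀ {fR fS u φ ζ}, IsMixedSolution B ι aR aS b c fR fS u φ ζ →
      ‖u‖ + ‖φ‖ + normY B ι ζ ≤ D * (‖fR‖ + ‖fS‖))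
    (h : IsMixedSolution B ι aR aS b c fR fS u φ ζ)
    (h' : IsMixedSolution B ι aR aS b c fR fS u' φ' ζ') : u = u' ∧ φ = φ' ∧ ζ = ζ' := by
  have hsub := h.sub hc h'
  have hle := hD hsub
  simp only [sub_self, norm_zero, add_zero, mul_zero] at hle
  have hu := norm_nonneg (u - u')
  have hφ := norm_nonneg (φ - φ')
  have hζ := normY_nonneg B ι (ζ - ζ')
  exact ⟨sub_eq_zero.1 (norm_eq_zero.1 (by linarith)),
    sub_eq_zero.1 (norm_eq_zero.1 (by linarith)),
    sub_eq_zero.1 (eq_zero_of_normY_eq_zero hsub.multiplier_mem (by linarith))⟩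

theorem norm_load_left_le (h : IsMixedSolution B ι aR aS b c fR fS u φ ζ) :
    ‖fR‖ ≤ ‖aR‖ * ‖u‖ + ‖b‖ * ‖φ‖ + M * ‖B‖ * normY B ι ζ := by
  have hM := hc.upper_pos
  have hζ := normY_nonneg B ι ζ
  refine fR.opNorm_le_bound (by positivity) fun v => ?_
  have hcv : |c (B v) ζ| ≤ M * (‖B‖ * ‖v‖) * normY B ι ζ :=
    (hc.bounded _ _ (memY_apply_left v) h.multiplier_mem).trans
      (by gcongr; exact (normY_apply_left_le v).trans (B.le_opNorm v))
  calc ‖fR v‖ = ‖aR u v + b v φ + c (B v) ζ‖ := by rw [h.eq_left v]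
    _ ≤ ‖aR u v‖ + ‖b v φ‖ + ‖c (B v) ζ‖ := norm_add₃_le
    _ ≤ ‖aR‖ * ‖u‖ * ‖v‖ + ‖b‖ * ‖v‖ * ‖φ‖ + M * (‖B‖ * ‖v‖) * normY B ι ζ :=
        add_le_add_three (aR.le_opNorm₂ u v) (b.le_opNorm₂ v φ) hcv
    _ = (‖aR‖ * ‖u‖ + ‖b‖ * ‖φ‖ + M * ‖B‖ * normY B ι ζ) * ‖v‖ := by ring

theorem norm_load_right_le (h : IsMixedSolution B ι aR aS b c fR fS u φ ζ) :
    ‖fS‖ ≤ ‖b‖ * ‖u‖ + ‖aS‖ * ‖φ‖ + M * normY B ι ζ := by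
  have hM := hc.upper_pos
  have hζ := normY_nonneg B ι ζ
  refine fS.opNorm_le_bound (by positivity) fun ψ => ?_
  have hcψ : |c (ι ψ) ζ| ≤ M * ‖ψ‖ * normY B ι ζ :=
    (hc.bounded _ _ (memY_apply_right ψ) h.multiplier_mem).trans
      (by gcongr; exact normY_apply_right_le ψ)
  calc ‖fS ψ‖ = ‖b u ψ + aS φ ψ - c (ι ψ) ζ‖ := by rw [h.eq_right ψ]
    _ ≤ ‖b u ψ‖ + ‖aS φ ψ‖ + ‖c (ι ψ) ζ‖ :=
        (norm_sub_le _ _).trans (by gcongr; exact norm_add_le _ _)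
    _ ≤ ‖b‖ * ‖u‖ * ‖ψ‖ + ‖aS‖ * ‖φ‖ * ‖ψ‖ + M * ‖ψ‖ * normY B ι ζ :=
        add_le_add_three (b.le_opNorm₂ u ψ) (aS.le_opNorm₂ φ ψ) hcψ
    _ = (‖b‖ * ‖u‖ + ‖aS‖ * ‖φ‖ + M * normY B ι ζ) * ‖ψ‖ := by ring

theorem exists_mul_norm_load_le (aR : R →L[ℝ] R →L[ℝ] ℝ) (aS : S →L[ℝ] S →L[ℝ] ℝ)
    (b : R →L[ℝ] S →L[ℝ] ℝ) :
    ∃ D > 0, ∀ {fR fS u φ ζ}, IsMixedSolution B ι aR aS b c fR fS u φ ζ →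
      D * (‖fR‖ + ‖fS‖) ≤ ‖u‖ + ‖φ‖ + normY B ι ζ := by
  have hM := hc.upper_pos
  let L := ‖aR‖ + ‖aS‖ + 2 * ‖b‖ + M * ‖B‖ + M
  have hL : 0 < L := by positivity
  refine ⟨L⁻¹, inv_pos.2 hL, fun {fR fS u φ ζ} h => ?_⟩
  rw [inv_mul_le_iff₀ hL]
  have hζ := normY_nonneg B ι ζ
  have hu_slack : 0 ≤ (‖aS‖ + ‖b‖ + M * ‖B‖ + M) * ‖u‖ := by positivity
  have hφ_slack : 0 ≤ (‖aR‖ + ‖b‖ + M * ‖B‖ + M) * ‖φ‖ := by positivity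
  have hζ_slack : 0 ≤ (‖aR‖ + ‖aS‖ + 2 * ‖b‖) * normY B ι ζ := by positivity
  linarith [h.norm_load_left_le hc, h.norm_load_right_le hc]

end IsMixedSolution

end Solutions

end MixedSystem

theorem mixed_system_wellposed_general
    {R S H : Type*}
    [NormedAddCommGroup R] [InnerProductSpace ℝ R] [CompleteSpace R]
    [NormedAddCommGroup S] [InnerProductSpace ℝ S] [CompleteSpace S]
    [NormedAddCommGroup H] [InnerProductSpace ℝ H] [CompleteSpace H]
    (ι : S →L[ℝ] H)
    (B : R →L[ℝ] H) (hBR : IsClosed (Set.range B))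
    (aR : R →L[ℝ] R →L[ℝ] ℝ)
    (aS : S →L[ℝ] S →L[ℝ] ℝ)
    (b : R →L[ℝ] S →L[ℝ] ℝ)
    (α : ℝ) (hα : 0 < α)
    (hcoerW : ∀ (v : R) (sv : S), ι sv = B v →
      α * (‖v‖ + ‖sv‖) ^ 2 ≤ aR v v + 2 * b v sv + aS sv sv)
    (c : H → H → ℝ) (m M : ℝ) (hm : 0 < m) (hmM : m ≤ M)
    (hcsymm : ∀ y z : H, memY B ι y → memY B ι z → c y z = c z y)
    (hcadd : ∀ y₁ y₂ z : H, memY B ι y₁ → memY B ι y₂ → memY B ι z →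
      c (y₁ + y₂) z = c y₁ z + c y₂ z)
    (hcsmul : ∀ (a : ℝ) (y z : H), memY B ι y → memY B ι z → c (a • y) z = a * c y z)
    (hccoer : ∀ y : H, memY B ι y → m * (normY B ι y) ^ 2 ≤ c y y)
    (hcbdd : ∀ y z : H, memY B ι y → memY B ι z →
      |c y z| ≤ M * normY B ι y * normY B ι z) :
    ∃ C₁ : ℝ, 0 < C₁ ∧ ∃ C₂ : ℝ, 0 < C₂ ∧
      ∀ (fR : R →L[ℝ] ℝ) (fS : S →L[ℝ] ℝ),
        ∃ (u : R) (φ : S) (ζ : H),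
          (memY B ι ζ ∧
            (∀ v : R, aR u v + b v φ + c (B v) ζ = fR v) ∧
            (∀ ψ : S, b u ψ + aS φ ψ - c (ι ψ) ζ = fS ψ) ∧
            (∀ η : H, memY B ι η → c (B u - ι φ) η = 0)) ∧
          (∀ (u' : R) (φ' : S) (ζ' : H), memY B ι ζ' →
            (∀ v : R, aR u' v + b v φ' + c (B v) ζ' = fR v) →
            (∀ ψ : S, b u' ψ + aS φ' ψ - c (ι ψ) ζ' = fS ψ) →
            (∀ η : H, memY B ι η → c (B u' - ι φ') η = 0) →
            u' = u ∧ φ' = φ ∧ ζ' = ζ) ∧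
          C₁ * (‖fR‖ + ‖fS‖) ≤ ‖u‖ + ‖φ‖ + normY B ι ζ ∧
          ‖u‖ + ‖φ‖ + normY B ι ζ ≤ C₂ * (‖fR‖ + ‖fS‖) ∧
          ι φ = B u ∧
          (∀ (v : R) (sv : S), ι sv = B v →
            aR u v + b u sv + b v φ + aS φ sv = fR v + fS sv) := by
  have hc : IsInnerOnSumSpace B ι c m M :=
    ⟨hm, hm.trans_le hmM, hcsymm, hcadd, hcsmul, hccoer, hcbdd⟩
  have hA : ∀ x ∈ (constraintMap B ι).ker, α * ‖x‖ ^ 2 ≤ blockForm aR aS b x x :=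
    fun _ => mul_norm_sq_le_blockForm hα.le hcoerW
  obtain ⟨γ, hγ, hC⟩ := hc.exists_mul_norm_sq_le_pullback hBR
  obtain ⟨C₁, hC₁, lower⟩ := IsMixedSolution.exists_mul_norm_load_le hc aR aS b
  obtain ⟨C₂, hC₂, upper⟩ := IsMixedSolution.exists_norm_le hc hα hA hγ hC
  refine ⟨C₁, hC₁, C₂, hC₂, fun fR fS => ?_⟩
  obtain ⟨u, φ, ζ, h⟩ := exists_isMixedSolution hc hα hA hγ hC fR fS
  exact ⟨u, φ, ζ, ⟨h.multiplier_mem, h.eq_left, h.eq_right, h.orthogonal⟩,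
    fun _ _ _ hζ h₁ h₂ h₃ => IsMixedSolution.eq_of_norm_le hc upper ⟨hζ, h₁, h₂, h₃⟩ h,
    lower h, upper h, h.apply_eq hc, fun _ _ => h.primal⟩

/-- Paper's Theorem 2.1.  Under the configurable-triple assumptions (with `B(R)` closed),
bounded symmetric positive-semidefinite forms `a_R`, `a_S`, a bounded form `b` whose sum
`a` is coercive on `W`, and a form `c` equivalent to an inner product on `Y`, the mixed
system (2.9) has, for every `f_R ∈ R'`, `f_S ∈ S'`, a unique solution `(u, φ, ζ)`, with
two-sided stability `‖u‖_R + ‖φ‖_S + ‖ζ‖_Y ≂ ‖f_R‖_{R'} + ‖f_S‖_{S'}`; moreover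
`B u = ι φ` and `u` solves the primal problem. -/
theorem mixed_system_wellposed
    {R S H : Type*}
    [NormedAddCommGroup R] [InnerProductSpace ℝ R] [CompleteSpace R]
    [NormedAddCommGroup S] [InnerProductSpace ℝ S] [CompleteSpace S]
    [NormedAddCommGroup H] [InnerProductSpace ℝ H] [CompleteSpace H]
    (ι : S →L[ℝ] H) (hι : Function.Injective ι)
    (B : R →L[ℝ] H) (hBR : IsClosed (Set.range B))
    -- the bounded symmetric positive-semidefinite bilinear forms a_R, a_S and bounded b
    (aR : R →L[ℝ] R →L[ℝ] ℝ) (haRsymm : ∀ u v : R, aR u v = aR v u)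
    (haRpos : ∀ u : R, 0 ≤ aR u u)
    (aS : S →L[ℝ] S →L[ℝ] ℝ) (haSsymm : ∀ u v : S, aS u v = aS v u)
    (haSpos : ∀ u : S, 0 ≤ aS u u)
    (b : R →L[ℝ] S →L[ℝ] ℝ)
    -- coercivity of a(v, v) = a_R(v,v) + 2 b(v, s_v) + a_S(s_v, s_v) on W
    (α : ℝ) (hα : 0 < α)
    (hcoerW : ∀ (v : R) (sv : S), ι sv = B v →
      α * (‖v‖ + ‖sv‖) ^ 2 ≤ aR v v + 2 * b v sv + aS sv sv)
    -- c : an inner product on Y with norm equivalent to ‖·‖_Y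
    (c : H → H → ℝ) (m M : ℝ) (hm : 0 < m) (hmM : m ≤ M)
    (hcsymm : ∀ y z : H, memY B ι y → memY B ι z → c y z = c z y)
    (hcadd : ∀ y₁ y₂ z : H, memY B ι y₁ → memY B ι y₂ → memY B ι z →
      c (y₁ + y₂) z = c y₁ z + c y₂ z)
    (hcsmul : ∀ (a : ℝ) (y z : H), memY B ι y → memY B ι z → c (a • y) z = a * c y z)
    (hccoer : ∀ y : H, memY B ι y → m * (normY B ι y) ^ 2 ≤ c y y)
    (hcbdd : ∀ y z : H, memY B ι y → memY B ι z →
      |c y z| ≤ M * normY B ι y * normY B ι z) :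
    ∃ C₁ : ℝ, 0 < C₁ ∧ ∃ C₂ : ℝ, 0 < C₂ ∧
      ∀ (fR : R →L[ℝ] ℝ) (fS : S →L[ℝ] ℝ),
        ∃ (u : R) (φ : S) (ζ : H),
          -- (u, φ, ζ) solves the mixed system, with ζ ∈ Y
          (memY B ι ζ ∧
            (∀ v : R, aR u v + b v φ + c (B v) ζ = fR v) ∧
            (∀ ψ : S, b u ψ + aS φ ψ - c (ι ψ) ζ = fS ψ) ∧
            (∀ η : H, memY B ι η → c (B u - ι φ) η = 0)) ∧
          -- uniqueness
          (∀ (u' : R) (φ' : S) (ζ' : H), memY B ι ζ' →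
            (∀ v : R, aR u' v + b v φ' + c (B v) ζ' = fR v) →
            (∀ ψ : S, b u' ψ + aS φ' ψ - c (ι ψ) ζ' = fS ψ) →
            (∀ η : H, memY B ι η → c (B u' - ι φ') η = 0) →
            u' = u ∧ φ' = φ ∧ ζ' = ζ) ∧
          -- two-sided stability
          C₁ * (‖fR‖ + ‖fS‖) ≤ ‖u‖ + ‖φ‖ + normY B ι ζ ∧
          ‖u‖ + ‖φ‖ + normY B ι ζ ≤ C₂ * (‖fR‖ + ‖fS‖) ∧
          -- u ∈ W with B u = ι φ and u solves the primal problem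
          ι φ = B u ∧
          (∀ (v : R) (sv : S), ι sv = B v →
            aR u v + b u sv + b v φ + aS φ sv = fR v + fS sv) := by
  exact mixed_system_wellposed_general ι B hBR aR aS b α hα hcoerW c m M hm hmM hcsymm hcadd
    hcsmul hccoer hcbdd
end

section
/- For every ρ ≥ 1 there exists a constant C(ρ) > 0 such that for every nondegenerate tetrahedron K ⊂ ℝ³ that is shape-regular with parameter ρ (i.e., h_K ≤ ρ · r_K), every affine function p : ℝ³ → ℝ, and every q ∈ P^e(K) (the span of the six products λᵢλⱼ, 1 ≤ i ≠ j ≤ 4, of barycentric coordinate functions), one has ∫_K ‖∇(p + q)‖² ≥ C(ρ) ( ∫_K ‖∇p‖² + h_K⁻² ∫_K |q|² ). (The per-tetrahedron inequality proved in the paper's Lemma 3.7, edge-bubble case.) -/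
open MeasureTheory

/-!
On a convex body `K = conv S` with `B(x₀, r) ⊆ K` and `diam K ≤ σ r`, let `u = p + q` with `p`
affine and `q` quadratic, vanishing on `S`. The gradient of `u` is affine, so its `L²` norm on `K`
controls its supremum `N` on `K`: convexity of `‖∇u‖²` bounds it on `B(x₀, r/2)`, and an affine map
grows at most linearly outside that ball. By the mean value inequality `u` oscillates on `K` by at
most `N · diam K`. On `S` the affine function `p` agrees with `u`, so by convexity
`‖p y - u x‖ ≤ N · diam K` for all `x, y ∈ K`; taking `y = x` bounds `q`, and varying `y` over
`B(x₀, r)` bounds `∇p`.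
-/

open Metric Module

section Inradius

variable {X : Type*} [PseudoMetricSpace X]

/-- The supremum of the radii of closed balls contained in `K`. It takes the junk value `0` when
these radii are unbounded. -/
noncomputable def inradius (K : Set X) : ℝ :=
  sSup {r | ∃ x, closedBall x r ⊆ K}

lemma exists_closedBall_subset_of_lt_inradius {K : Set X} {r : ℝ} (hr : 0 ≤ r)
    (hrK : r < inradius K) : ∃ x, closedBall x r ⊆ K := by
  have radii_nonempty : {r | ∃ x, closedBall x r ⊆ K}.Nonempty := by
    by_contra hempty
    rw [inradius, Set.not_nonempty_iff_eq_empty.1 hempty, Real.sSup_empty] at hrK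
    exact hrK.not_ge hr
  obtain ⟨s, ⟨x, hx⟩, hrs⟩ := exists_lt_of_lt_csSup radii_nonempty hrK
  exact ⟨x, (closedBall_subset_closedBall hrs.le).trans hx⟩

lemma exists_closedBall_subset_and_diam_le {K : Set X} {ρ : ℝ} (hρ : 0 < ρ) (hdiam : 0 < diam K)
    (hK : diam K ≤ ρ * inradius K) :
    ∃ x r, 0 < r ∧ closedBall x r ⊆ K ∧ diam K ≤ 2 * ρ * r := by
  have inradius_pos : 0 < inradius K := pos_of_mul_pos_right (hdiam.trans_le hK) hρ.le
  obtain ⟨x, hx⟩ := exists_closedBall_subset_of_lt_inradius (by positivity)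
    (half_lt_self inradius_pos)
  exact ⟨x, inradius K / 2, by positivity, hx, by linarith⟩

end Inradius

section AffineMaps

lemma norm_affineMap_sub_le_of_mem_convexHull {V F : Type*} [AddCommGroup V] [Module ℝ V]
    [SeminormedAddCommGroup F] [NormedSpace ℝ F] (p : V →ᵃ[ℝ] F) {S : Set V} {c : F} {M : ℝ}
    (hS : ∀ y ∈ S, ‖p y - c‖ ≤ M) {y : V} (hy : y ∈ convexHull ℝ S) : ‖p y - c‖ ≤ M := by
  have hsub : convexHull ℝ S ⊆ p ⁻¹' closedBall c M :=
    convexHull_min (fun y hy => mem_closedBall_iff_norm.2 (hS y hy))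
      ((convex_closedBall c M).affine_preimage p)
  exact mem_closedBall_iff_norm.1 (hsub hy)

variable {E F : Type*} [NormedAddCommGroup E] [NormedSpace ℝ E]
  [NormedAddCommGroup F] [NormedSpace ℝ F]

lemma norm_contLinear_le_of_norm_sub_le_on_closedBall (f : E →ᴬ[ℝ] F) {x₀ : E} {r M : ℝ} {c : F}
    (hr : 0 < r) (hf : ∀ x ∈ closedBall x₀ r, ‖f x - c‖ ≤ M) : ‖f.contLinear‖ ≤ M / r := by
  have hM : 0 ≤ M := (norm_nonneg _).trans (hf x₀ (mem_closedBall_self hr.le))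
  refine f.contLinear.opNorm_le_of_unit_norm (by positivity) fun w hw => ?_
  -- Comparing `x₀ + r w` with `x₀ - r w` rather than with `x₀` saves a factor of two.
  have hdiff : (2 * r) • f.contLinear w = (f (r • w + x₀) - c) - (f (-(r • w) + x₀) - c) := by
    have hadd (v : E) : f (v + x₀) = f.contLinear v + f x₀ := f.map_vadd x₀ v
    rw [hadd, hadd, map_neg, map_smul, two_mul, add_smul]
    abel
  have hbound : 2 * r * ‖f.contLinear w‖ ≤ M + M := by
    calc 2 * r * ‖f.contLinear w‖ = ‖(2 * r) • f.contLinear w‖ := by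
          rw [norm_smul, Real.norm_of_nonneg (by positivity)]
      _ ≤ M + M := by
          rw [hdiff]
          refine norm_sub_le_of_le (hf _ ?_) (hf _ ?_) <;>
            simp [norm_smul, hw, abs_of_pos hr]
  rw [le_div_iff₀ hr]
  linarith

lemma norm_affineMap_le_of_norm_le_on_closedBall (f : E →ᴬ[ℝ] F) {x₀ : E} {r M : ℝ} (hr : 0 < r)
    (hf : ∀ x ∈ closedBall x₀ r, ‖f x‖ ≤ M) (x : E) : ‖f x‖ ≤ (1 + dist x x₀ / r) * M := by
  have hlin : ‖f.contLinear‖ ≤ M / r :=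
    norm_contLinear_le_of_norm_sub_le_on_closedBall f (c := 0) hr (by simpa using hf)
  have hx : f x = f.contLinear (x - x₀) + f x₀ := by simpa using f.map_vadd x₀ (x - x₀)
  calc ‖f x‖ ≤ M / r * ‖x - x₀‖ + M := by
        rw [hx]
        exact norm_add_le_of_le (f.contLinear.le_of_opNorm_le hlin _)
          (hf x₀ (mem_closedBall_self hr.le))
    _ = (1 + dist x x₀ / r) * M := by rw [dist_eq_norm]; ring

end AffineMaps

section QuadraticBubbles

variable {E F : Type*} [NormedAddCommGroup E] [NormedSpace ℝ E]
  [NormedAddCommGroup F] [NormedSpace ℝ F]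

variable (F) in
/-- The polynomial maps of degree at most two that vanish on `S`, encoded as the maps vanishing
on `S` whose derivative is a continuous affine map. When `S` is the vertex set of a simplex, these
include the paper's edge bubbles `P^e(K)`. -/
def quadraticBubbles (S : Set E) : Submodule ℝ (E → F) where
  carrier := {q | (∀ x ∈ S, q x = 0) ∧
    ∃ D : E →ᴬ[ℝ] E →L[ℝ] F, ∀ x, HasFDerivAt q (D x) x}
  zero_mem' := ⟨fun _ _ => rfl, 0, fun x => hasFDerivAt_const 0 x⟩
  add_mem' := by
    rintro q q' ⟨hq, D, hD⟩ ⟨hq', D', hD'⟩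
    exact ⟨fun x hx => by simp [hq x hx, hq' x hx], D + D', fun x => (hD x).add (hD' x)⟩
  smul_mem' := by
    rintro c q ⟨hq, D, hD⟩
    exact ⟨fun x hx => by simp [hq x hx], c • D, fun x => (hD x).const_smul c⟩

lemma mul_mem_quadraticBubbles (f g : E →ᴬ[ℝ] ℝ) {S : Set E} (hS : ∀ x ∈ S, f x * g x = 0) :
    (fun x => f x * g x) ∈ quadraticBubbles ℝ S :=
  ⟨hS, (ContinuousLinearMap.toSpanSingleton ℝ g.contLinear).toContinuousAffineMap.comp f +
    (ContinuousLinearMap.toSpanSingleton ℝ f.contLinear).toContinuousAffineMap.comp g,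
    fun _ => f.hasFDerivAt.mul g.hasFDerivAt⟩

lemma span_mul_barycentric_le_quadraticBubbles [FiniteDimensional ℝ E] {ι : Type*} [DecidableEq ι]
    {a : ι → E} {lam : ι → E →ᵃ[ℝ] ℝ} (hlam : ∀ i j, lam i (a j) = if i = j then 1 else 0) :
    Submodule.span ℝ {f : E → ℝ | ∃ i j, i ≠ j ∧ f = fun x => lam i x * lam j x} ≤
      quadraticBubbles ℝ (Set.range a) := by
  rw [Submodule.span_le]
  rintro _ ⟨i, j, hij, rfl⟩
  refine mul_mem_quadraticBubbles ⟨lam i, (lam i).continuous_of_finiteDimensional⟩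
    ⟨lam j, (lam j).continuous_of_finiteDimensional⟩ ?_
  rintro _ ⟨k, rfl⟩
  change lam i (a k) * lam j (a k) = 0
  grind

lemma norm_affineInterpolant_sub_le_of_norm_deriv_le (p : E →ᴬ[ℝ] F) {S : Set E} {u : E → F}
    {D : E → E →L[ℝ] F} {N : ℝ} (hS : Bornology.IsBounded S) (hup : ∀ x ∈ S, u x = p x)
    (hu : ∀ x ∈ convexHull ℝ S, HasFDerivAt u (D x) x) (hD : ∀ x ∈ convexHull ℝ S, ‖D x‖ ≤ N)
    {x y : E} (hx : x ∈ convexHull ℝ S) (hy : y ∈ convexHull ℝ S) :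
    ‖p y - u x‖ ≤ N * diam (convexHull ℝ S) := by
  refine norm_affineMap_sub_le_of_mem_convexHull (p : E →ᵃ[ℝ] F) (fun z hz => ?_) hy
  have hzK := subset_convexHull ℝ S hz
  calc ‖p z - u x‖ = ‖u z - u x‖ := by rw [hup z hz]
    _ ≤ N * ‖z - x‖ := (convex_convexHull ℝ S).norm_image_sub_le_of_norm_hasFDerivWithin_le
        (fun x hx => (hu x hx).hasFDerivWithinAt) hD hx hzK
    _ ≤ N * diam (convexHull ℝ S) := by
        gcongr
        · exact (norm_nonneg _).trans (hD x hx)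
        · exact dist_eq_norm z x ▸ dist_le_diam_of_mem (isBounded_convexHull.2 hS) hzK hx

end QuadraticBubbles

section Integration

variable {E F : Type*} [NormedAddCommGroup E] [NormedSpace ℝ E] [FiniteDimensional ℝ E]
  [MeasurableSpace E] [NormedAddCommGroup F] [NormedSpace ℝ F] (μ : Measure E)

lemma setIntegral_norm_fderiv_add_le_of_norm_deriv_le [IsFiniteMeasureOnCompacts μ]
    (p : E →ᴬ[ℝ] F) {S : Set E} (hS : Bornology.IsBounded S)
    {q : E → F} (hq : ∀ x ∈ S, q x = 0) {D : E → E →L[ℝ] F} {N : ℝ}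
    (hD : ∀ x ∈ convexHull ℝ S, HasFDerivAt (fun y => p y + q y) (D x) x)
    (hN : ∀ x ∈ convexHull ℝ S, ‖D x‖ ≤ N)
    {x₀ : E} {r σ : ℝ} (hr : 0 < r) (hball : closedBall x₀ r ⊆ convexHull ℝ S)
    (hdiam : diam (convexHull ℝ S) ≤ σ * r) :
    (∫ x in convexHull ℝ S, ‖fderiv ℝ p x‖ ^ 2 ∂μ) +
        (∫ x in convexHull ℝ S, ‖q x‖ ^ 2 ∂μ) / diam (convexHull ℝ S) ^ 2 ≤
      (σ ^ 2 + 1) * N ^ 2 * μ.real (convexHull ℝ S) := by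
  set K := convexHull ℝ S
  have hKfin : μ K < ⊤ := (isBounded_convexHull.2 hS).measure_lt_top
  have hx₀ : x₀ ∈ K := hball (mem_closedBall_self hr.le)
  have hN₀ : 0 ≤ N := (norm_nonneg _).trans (hN x₀ hx₀)
  have hosc {x y : E} (hx : x ∈ K) (hy : y ∈ K) : ‖p y - (p x + q x)‖ ≤ N * diam K :=
    norm_affineInterpolant_sub_le_of_norm_deriv_le p hS (fun x hx => by simp [hq x hx]) hD hN hx hy
  have hgrad : ‖p.contLinear‖ ≤ N * σ := by
    calc ‖p.contLinear‖ ≤ N * diam K / r :=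
          norm_contLinear_le_of_norm_sub_le_on_closedBall p hr fun y hy => hosc hx₀ (hball hy)
      _ ≤ N * σ := by
          rw [mul_div_assoc]
          gcongr
          exact (div_le_iff₀ hr).2 hdiam
  have hq_sq : ∫ x in K, ‖q x‖ ^ 2 ∂μ ≤ (N * diam K) ^ 2 * μ.real K := by
    refine (Real.le_norm_self _).trans (norm_setIntegral_le_of_norm_le_const hKfin fun x hx => ?_)
    have hqx : ‖q x‖ ≤ N * diam K := by simpa using hosc hx hx
    rw [norm_pow, norm_norm]
    gcongr
  have hq_div : (∫ x in K, ‖q x‖ ^ 2 ∂μ) / diam K ^ 2 ≤ N ^ 2 * μ.real K :=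
    div_le_of_le_mul₀ (by positivity) (by positivity) (hq_sq.trans_eq (by ring))
  simp only [p.fderiv, setIntegral_const, smul_eq_mul]
  calc μ.real K * ‖p.contLinear‖ ^ 2 + (∫ x in K, ‖q x‖ ^ 2 ∂μ) / diam K ^ 2
      ≤ μ.real K * (N * σ) ^ 2 + N ^ 2 * μ.real K := by gcongr
    _ = (σ ^ 2 + 1) * N ^ 2 * μ.real K := by ring

variable [BorelSpace E] [μ.IsAddHaarMeasure]

lemma setIntegral_comp_reflection_closedBall (f : E → F) (z : E) (t : ℝ) :
    ∫ x in closedBall z t, f (z + z - x) ∂μ = ∫ x in closedBall z t, f x ∂μ := by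
  have hpreimage : (fun x => z + z - x) ⁻¹' closedBall z t = closedBall z t := by
    ext x
    rw [Set.mem_preimage, mem_closedBall_iff_norm, mem_closedBall_iff_norm',
      show z + z - x - z = z - x by abel]
  have := (μ.measurePreserving_sub_left (z + z)).setIntegral_preimage_emb
    (Homeomorph.subLeft (z + z)).measurableEmbedding f (closedBall z t)
  rwa [hpreimage] at this

lemma measureReal_closedBall_mul_le_setIntegral_of_convexOn {f : E → ℝ}
    (hf : ConvexOn ℝ Set.univ f) (z : E) (t : ℝ) :
    μ.real (closedBall z t) * f z ≤ ∫ x in closedBall z t, f x ∂μ := by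
  have hcont : Continuous f := continuousOn_univ.1 (hf.continuousOn isOpen_univ)
  have hfi {g : E → ℝ} (hg : Continuous g) : IntegrableOn g (closedBall z t) μ :=
    hg.continuousOn.integrableOn_compact (isCompact_closedBall z t)
  have hcont_refl : Continuous fun x => f (z + z - x) := by fun_prop
  have hmid (x : E) : 2 * f z ≤ f x + f (z + z - x) := by
    have hconv := hf.2 (Set.mem_univ x) (Set.mem_univ (z + z - x)) (by norm_num) (by norm_num)
      (add_halves (1 : ℝ))
    rw [show (1 / 2 : ℝ) • x + (1 / 2 : ℝ) • (z + z - x) = z by module, smul_eq_mul,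
      smul_eq_mul] at hconv
    linarith
  have hle : ∫ _ in closedBall z t, 2 * f z ∂μ ≤
      ∫ x in closedBall z t, (f x + f (z + z - x)) ∂μ :=
    setIntegral_mono (hfi continuous_const) ((hfi hcont).add (hfi hcont_refl)) hmid
  rw [integral_add (hfi hcont) (hfi hcont_refl), setIntegral_comp_reflection_closedBall,
    setIntegral_const, smul_eq_mul] at hle
  linarith

lemma norm_affineMap_le_sqrt_setIntegral_div (f : E →ᴬ[ℝ] F) {K : Set E}
    (hK : Bornology.IsBounded K) {z : E} {t : ℝ} (ht : 0 < t) (hzK : closedBall z t ⊆ K) :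
    ‖f z‖ ≤ √((∫ x in K, ‖f x‖ ^ 2 ∂μ) / μ.real (closedBall z t)) := by
  have hcont : Continuous fun x => ‖f x‖ ^ 2 := f.continuous.norm.pow 2
  have hconv : ConvexOn ℝ Set.univ fun x => ‖f x‖ ^ 2 :=
    ((convexOn_univ_norm (E := F)).comp_affineMap (f : E →ᵃ[ℝ] F)).pow
      (fun _ _ => norm_nonneg _) 2
  have hfi : IntegrableOn (fun x => ‖f x‖ ^ 2) K μ :=
    (hcont.continuousOn.integrableOn_compact hK.isCompact_closure).mono_set subset_closure
  have hvol : 0 < μ.real (closedBall z t) :=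
    ENNReal.toReal_pos (measure_closedBall_pos μ z ht).ne' measure_closedBall_lt_top.ne
  refine Real.le_sqrt_of_sq_le ((le_div_iff₀' hvol).2 ?_)
  calc μ.real (closedBall z t) * ‖f z‖ ^ 2 ≤ ∫ x in closedBall z t, ‖f x‖ ^ 2 ∂μ :=
        measureReal_closedBall_mul_le_setIntegral_of_convexOn μ hconv z t
    _ ≤ ∫ x in K, ‖f x‖ ^ 2 ∂μ :=
        setIntegral_mono_set hfi (.of_forall fun x => by positivity) hzK.eventuallyLE

lemma norm_affineMap_le_sqrt_setIntegral_div_of_closedBall_subset (f : E →ᴬ[ℝ] F) {K : Set E}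
    (hK : Bornology.IsBounded K) {x₀ : E} {r σ : ℝ} (hr : 0 < r) (hball : closedBall x₀ r ⊆ K)
    (hdiam : diam K ≤ σ * r) {x : E} (hx : x ∈ K) :
    ‖f x‖ ≤ (1 + 2 * σ) * √((∫ x in K, ‖f x‖ ^ 2 ∂μ) / μ.real (closedBall x₀ (r / 2))) := by
  have hinner : ∀ z ∈ closedBall x₀ (r / 2),
      ‖f z‖ ≤ √((∫ x in K, ‖f x‖ ^ 2 ∂μ) / μ.real (closedBall x₀ (r / 2))) := by
    intro z hz
    have hzK : closedBall z (r / 2) ⊆ K :=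
      (closedBall_subset_closedBall' (by linarith [mem_closedBall.1 hz])).trans hball
    rw [μ.addHaar_real_closedBall_center x₀, ← μ.addHaar_real_closedBall_center z]
    exact norm_affineMap_le_sqrt_setIntegral_div μ f hK (half_pos hr) hzK
  have hdist : dist x x₀ ≤ σ * r :=
    (dist_le_diam_of_mem hK hx (hball (mem_closedBall_self hr.le))).trans hdiam
  refine (norm_affineMap_le_of_norm_le_on_closedBall f (half_pos hr) hinner x).trans ?_
  gcongr
  rw [div_le_iff₀ (half_pos hr)]
  linarith

lemma measureReal_le_pow_mul_measureReal_closedBall {K : Set E} (hK : Bornology.IsBounded K)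
    {x₀ : E} (hx₀ : x₀ ∈ K) {t σ : ℝ} (ht : 0 < t) (hdiam : diam K ≤ σ * t) :
    μ.real K ≤ σ ^ finrank ℝ E * μ.real (closedBall x₀ t) := by
  have hσt : 0 ≤ σ * t := diam_nonneg.trans hdiam
  have hsub : K ⊆ closedBall x₀ (σ * t) := fun x hx =>
    (dist_le_diam_of_mem hK hx hx₀).trans hdiam
  calc μ.real K ≤ μ.real (closedBall x₀ (σ * t)) :=
        measureReal_mono hsub measure_closedBall_lt_top.ne
    _ = σ ^ finrank ℝ E * μ.real (closedBall x₀ t) := by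
        rw [μ.addHaar_real_closedBall _ hσt, μ.addHaar_real_closedBall _ ht.le, mul_pow, mul_assoc]

/-- The constant of the stable sum estimate in dimension `n` on convex bodies whose diameter is at
most `σ` times the radius of some ball they contain. -/
def stableSumConst (n : ℕ) (σ : ℝ) : ℝ :=
  (σ ^ 2 + 1) * (1 + 2 * σ) ^ 2 * (2 * σ) ^ n

lemma stableSumConst_pos (n : ℕ) {σ : ℝ} (hσ : 0 < σ) : 0 < stableSumConst n σ := by
  unfold stableSumConst
  positivity

lemma stable_sum_of_closedBall_subset (p : E →ᴬ[ℝ] F) {S : Set E} (hS : Bornology.IsBounded S)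
    {q : E → F} (hq : q ∈ quadraticBubbles F S)
    {x₀ : E} {r σ : ℝ} (hr : 0 < r) (hball : closedBall x₀ r ⊆ convexHull ℝ S)
    (hdiam : diam (convexHull ℝ S) ≤ σ * r) :
    (∫ x in convexHull ℝ S, ‖fderiv ℝ p x‖ ^ 2 ∂μ) +
        (∫ x in convexHull ℝ S, ‖q x‖ ^ 2 ∂μ) / diam (convexHull ℝ S) ^ 2 ≤
      stableSumConst (finrank ℝ E) σ *
        ∫ x in convexHull ℝ S, ‖fderiv ℝ (fun y => p y + q y) x‖ ^ 2 ∂μ := by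
  obtain ⟨hq₀, Dq, hDq⟩ := hq
  set K := convexHull ℝ S
  have hK : Bornology.IsBounded K := isBounded_convexHull.2 hS
  set D : E →ᴬ[ℝ] E →L[ℝ] F := .const ℝ E p.contLinear + Dq
  have hD (x : E) : HasFDerivAt (fun y => p y + q y) (D x) x := p.hasFDerivAt.add (hDq x)
  simp only [(hD _).fderiv]
  set I := ∫ x in K, ‖D x‖ ^ 2 ∂μ
  set V := μ.real (closedBall x₀ (r / 2))
  have hI : 0 ≤ I := integral_nonneg fun x => by positivity
  have hV : 0 < V :=
    ENNReal.toReal_pos (measure_closedBall_pos μ x₀ (half_pos hr)).ne' measure_closedBall_lt_top.ne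
  have hKV : μ.real K ≤ (2 * σ) ^ finrank ℝ E * V :=
    measureReal_le_pow_mul_measureReal_closedBall μ hK (hball (mem_closedBall_self hr.le))
      (half_pos hr) (by linarith)
  have hN : ∀ x ∈ K, ‖D x‖ ≤ (1 + 2 * σ) * √(I / V) := fun x hx =>
    norm_affineMap_le_sqrt_setIntegral_div_of_closedBall_subset μ D hK hr hball hdiam hx
  calc _ ≤ (σ ^ 2 + 1) * ((1 + 2 * σ) * √(I / V)) ^ 2 * μ.real K :=
        setIntegral_norm_fderiv_add_le_of_norm_deriv_le μ p hS hq₀ (fun x _ => hD x) hN hr hball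
          hdiam
    _ ≤ (σ ^ 2 + 1) * ((1 + 2 * σ) * √(I / V)) ^ 2 * ((2 * σ) ^ finrank ℝ E * V) := by gcongr
    _ = stableSumConst (finrank ℝ E) σ * I := by
        rw [mul_pow, Real.sq_sqrt (div_nonneg hI hV.le), stableSumConst]
        field_simp

theorem edge_bubble_stable_sum_general {ρ : ℝ} (hρ : 0 < ρ) :
    ∃ C : ℝ, 0 < C ∧ ∀ S : Set E, Bornology.IsBounded S → S.Nontrivial →
      diam (convexHull ℝ S) ≤ ρ * inradius (convexHull ℝ S) →
      ∀ (p : E →ᴬ[ℝ] F), ∀ q ∈ quadraticBubbles F S,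
        C * ((∫ x in convexHull ℝ S, ‖fderiv ℝ p x‖ ^ 2 ∂μ) +
              (∫ x in convexHull ℝ S, ‖q x‖ ^ 2 ∂μ) / diam (convexHull ℝ S) ^ 2) ≤
          ∫ x in convexHull ℝ S, ‖fderiv ℝ (fun y => p y + q y) x‖ ^ 2 ∂μ := by
  have hC : 0 < stableSumConst (finrank ℝ E) (2 * ρ) := stableSumConst_pos _ (by positivity)
  refine ⟨_, inv_pos.2 hC, fun S hS hSnt hshape p q hq => (inv_mul_le_iff₀ hC).2 ?_⟩
  have hdiam : 0 < diam (convexHull ℝ S) := by simpa using diam_pos hSnt hS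
  obtain ⟨x₀, r, hr, hball, hdr⟩ := exists_closedBall_subset_and_diam_le hρ hdiam hshape
  exact stable_sum_of_closedBall_subset μ p hS hq hr hball hdr

end Integration

/-- The per-tetrahedron inequality in the paper's Lemma 3.7 (edge-bubble case).
For every `ρ ≥ 1` there is `C(ρ) > 0` such that for every nondegenerate tetrahedron
`K ⊂ ℝ³` which is shape-regular with parameter `ρ` (`h_K ≤ ρ · r_K`, with `h_K` the
diameter and `r_K` the inradius), every affine `p` and every
`q ∈ P^e(K) = span{λᵢλⱼ : i ≠ j}` (products of barycentric coordinates),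
`∫_K ‖∇(p + q)‖² ≥ C(ρ) (∫_K ‖∇p‖² + h_K⁻² ∫_K |q|²)`. -/
theorem edge_bubble_stable_sum :
    ∀ ρ : ℝ, 1 ≤ ρ → ∃ C : ℝ, 0 < C ∧
      ∀ a : Fin 4 → EuclideanSpace ℝ (Fin 3), AffineIndependent ℝ a →
      ∀ K : Set (EuclideanSpace ℝ (Fin 3)), K = convexHull ℝ (Set.range a) →
      -- shape regularity: h_K ≤ ρ · r_K
      Metric.diam K ≤
        ρ * sSup {rad : ℝ | ∃ x : EuclideanSpace ℝ (Fin 3), Metric.closedBall x rad ⊆ K} →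
      -- barycentric coordinate functions of K
      ∀ lam : Fin 4 → (EuclideanSpace ℝ (Fin 3) →ᵃ[ℝ] ℝ),
        (∀ i j : Fin 4, lam i (a j) = if i = j then 1 else 0) →
      ∀ (p : EuclideanSpace ℝ (Fin 3) →ᵃ[ℝ] ℝ) (q : EuclideanSpace ℝ (Fin 3) → ℝ),
        q ∈ Submodule.span ℝ {f : EuclideanSpace ℝ (Fin 3) → ℝ |
          ∃ i j : Fin 4, i ≠ j ∧ f = fun x => lam i x * lam j x} →
        C * ((∫ x in K, ‖fderiv ℝ (fun y => p y) x‖ ^ 2) +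
              (∫ x in K, (q x) ^ 2) / (Metric.diam K) ^ 2) ≤
          ∫ x in K, ‖fderiv ℝ (fun y => p y + q y) x‖ ^ 2 := by
  intro ρ hρ
  obtain ⟨C, hC, hstable⟩ := edge_bubble_stable_sum_general (F := ℝ)
    (volume : Measure (EuclideanSpace ℝ (Fin 3))) (zero_lt_one.trans_le hρ)
  refine ⟨C, hC, ?_⟩
  rintro a ha _ rfl hshape lam hlam p q hq
  have vertices_nontrivial : (Set.range a).Nontrivial := by
    simpa using Set.nontrivial_univ.image ha.injective
  simpa only [Real.norm_eq_abs, sq_abs, ContinuousAffineMap.coe_mk] using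
    hstable (Set.range a) (Set.finite_range a).isBounded vertices_nontrivial hshape
      ⟨p, p.continuous_of_finiteDimensional⟩ q (span_mul_barycentric_le_quadraticBubbles hlam hq)
end
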